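/- Let T > 0 and let constants 0 < c₂ < c₃ and L > 0 be given. Let F̲, F̄ : [0,T] × ℝ → ℝ satisfy F̲ ≤ F̄ pointwise, with t ↦ F̄(t,y) and t ↦ F̲(t,y) Lebesgue measurable for each y, both F̄(t,·) and F̲(t,·) L-Lipschitz on [0, c₃] for every t, and sup over t ∈ [0,T] and y ∈ [0, c₃] of |F̄(t,y)| + |F̲(t,y)| finite. Let h̲ ≤ h̄ be real numbers with 0 ≤ h̲ and h̄ ≤ c₂. Suppose F̲(t, 0) ≥ 0 for all t, and ε > 0 satisfies F̄(t, c₃) ≤ ε for all t and ε(e^{LT} − 1)/L ≤ c₃ − c₂. Then the two dominating backward ODEs ȳ(t) = h̄ + ∫_t^T F̄(s, ȳ(s)) ds and y̲(t) = h̲ + ∫_t^T F̲(s, y̲(s)) ds admit continuous solutions ȳ, y̲ on [0,T] with 0 ≤ y̲(t) ≤ ȳ(t) ≤ c₃ for all t ∈ [0,T]. -/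

import Mathlib

open MeasureTheory Set

lemma aux_expint (lam T a b : ℝ) (hl : lam ≠ 0) :
    ∫ s in a..b, Real.exp (lam * (T - s)) =
      (Real.exp (lam * (T - a)) - Real.exp (lam * (T - b))) / lam := by
  have h := intervalIntegral.integral_eq_sub_of_hasDerivAt (a := a) (b := b)
    (f := fun s => -Real.exp (lam * (T - s)) / lam)
    (f' := fun s => Real.exp (lam * (T - s))) ?_ ?_
  · rw [h]; ring
  · intro x _
    have h1 : HasDerivAt (fun s : ℝ => lam * (T - s)) (lam * (-1)) x :=
      ((hasDerivAt_id x).const_sub T).const_mul lam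
    have h2 := (h1.exp.neg).div_const lam
    refine HasDerivAt.congr_deriv h2 ?_
    field_simp
  · exact Continuous.intervalIntegrable (by fun_prop) _ _

lemma aux_comp_meas (G : ℝ → ℝ → ℝ) (L : ℝ) (hm : ∀ y, Measurable fun t => G t y)
    (hLip : ∀ t x y, |G t x - G t y| ≤ L * |x - y|) (z : ℝ → ℝ) (hz : Measurable z) :
    Measurable fun s => G s (z s) := by
  have h := stronglyMeasurable_uncurry_of_continuous_of_stronglyMeasurable
    (u := fun y t => G t y) (fun t => by
      have : LipschitzWith (Real.toNNReal L) (fun y => G t y) := by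
        refine LipschitzWith.of_dist_le_mul fun x y => ?_
        rw [Real.dist_eq, Real.dist_eq]
        exact (hLip t x y).trans
          (mul_le_mul_of_nonneg_right (Real.le_coe_toNNReal L) (abs_nonneg _))
      exact this.continuous) (fun y => (hm y).stronglyMeasurable)
  exact h.measurable.comp (hz.prodMk measurable_id)

lemma aux_int (G : ℝ → ℝ → ℝ) (L K : ℝ) (hm : ∀ y, Measurable fun t => G t y)
    (hLip : ∀ t x y, |G t x - G t y| ≤ L * |x - y|) (hK : ∀ t y, |G t y| ≤ K)
    (z : ℝ → ℝ) (hz : Measurable z) (a b : ℝ) :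
    IntervalIntegrable (fun s => G s (z s)) volume a b := by
  refine (intervalIntegrable_const (c := K)).mono_fun'
    (aux_comp_meas G L hm hLip z hz).aestronglyMeasurable ?_
  exact Filter.Eventually.of_forall fun s => hK s (z s)

lemma aux_exist (T L K h : ℝ) (hT : 0 < T) (hL : 0 < L) (G : ℝ → ℝ → ℝ)
    (hm : ∀ y, Measurable fun t => G t y)
    (hLip : ∀ t x y, |G t x - G t y| ≤ L * |x - y|) (hK : ∀ t y, |G t y| ≤ K) :
    ∃ y : ℝ → ℝ, Continuous y ∧ ∀ t ∈ Icc (0:ℝ) T, y t = h + ∫ s in t..T, G s (y s) := by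
  have hK0 : 0 ≤ K := (abs_nonneg _).trans (hK 0 0)
  let c : ℝ → ℝ := fun t => max 0 (min t T)
  have hc : Continuous c := by fun_prop
  have hc0 : ∀ t, 0 ≤ c t := fun t => le_max_left _ _
  have hcT : ∀ t, c t ≤ T := fun t => max_le hT.le (min_le_right _ _)
  have hce : ∀ t ∈ Icc (0:ℝ) T, c t = t := fun t ht => by
    simp [c, min_eq_left ht.2, max_eq_right ht.1]
  let W : (BoundedContinuousFunction ℝ ℝ) → ℝ → ℝ :=
    fun z s => Real.exp (2 * L * (T - s)) * z s
  have hW : ∀ z, Continuous (W z) := fun z => by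
    have := z.continuous
    fun_prop
  have hI : ∀ z a b, IntervalIntegrable (fun s => G s (W z s)) volume a b :=
    fun z a b => aux_int G L K hm hLip hK _ (hW z).measurable a b
  let R : (BoundedContinuousFunction ℝ ℝ) → ℝ → ℝ := fun z t =>
    Real.exp (-(2 * L * (T - c t))) * (h + ∫ s in (c t)..T, G s (W z s))
  have hR : ∀ z, Continuous (R z) := fun z => by
    have h1 : Continuous fun t => ∫ s in T..t, G s (W z s) :=
      intervalIntegral.continuous_primitive (fun a b => hI z a b) T
    have h2 : Continuous fun t => ∫ s in (c t)..T, G s (W z s) := by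
      have : (fun t => ∫ s in (c t)..T, G s (W z s)) =
          fun t => - ∫ s in T..(c t), G s (W z s) := by
        ext t; rw [intervalIntegral.integral_symm]
      rw [this]
      exact (h1.comp hc).neg
    fun_prop
  have hRb : ∀ z t, ‖R z t‖ ≤ |h| + K * T := fun z t => by
    have h1 : Real.exp (-(2 * L * (T - c t))) ≤ 1 := by
      rw [Real.exp_le_one_iff]
      have := mul_nonneg hL.le (sub_nonneg.2 (hcT t))
      linarith
    have h2 : ‖∫ s in (c t)..T, G s (W z s)‖ ≤ K * |T - c t| :=
      intervalIntegral.norm_integral_le_of_norm_le_const fun s _ => hK _ _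
    have h3 : |T - c t| ≤ T := by
      rw [abs_of_nonneg (sub_nonneg.2 (hcT t))]; linarith [hc0 t]
    have h4 : |h + ∫ s in (c t)..T, G s (W z s)| ≤ |h| + K * T :=
      (abs_add_le _ _).trans (add_le_add le_rfl
        (h2.trans (mul_le_mul_of_nonneg_left h3 hK0)))
    rw [Real.norm_eq_abs, abs_mul, abs_of_pos (Real.exp_pos _)]
    calc _ ≤ 1 * |h + ∫ s in (c t)..T, G s (W z s)| :=
          mul_le_mul_of_nonneg_right h1 (abs_nonneg _)
      _ ≤ _ := by rw [one_mul]; exact h4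
  let P : (BoundedContinuousFunction ℝ ℝ) → (BoundedContinuousFunction ℝ ℝ) := fun z =>
    BoundedContinuousFunction.ofNormedAddCommGroup (R z) (hR z) _ (hRb z)
  have hP : ContractingWith (1/2) P := by
    refine ⟨by rw [← NNReal.coe_lt_coe]; norm_num, LipschitzWith.of_dist_le_mul fun z w => ?_⟩
    rw [BoundedContinuousFunction.dist_le (by positivity)]
    intro t
    change dist (R z t) (R w t) ≤ _
    rw [Real.dist_eq]
    have e1 : R z t - R w t = Real.exp (-(2 * L * (T - c t))) *
        ∫ s in (c t)..T, (G s (W z s) - G s (W w s)) := by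
      rw [intervalIntegral.integral_sub (hI z _ _) (hI w _ _)]
      simp only [R]; ring
    have e2 : |∫ s in (c t)..T, (G s (W z s) - G s (W w s))| ≤
        ∫ s in (c t)..T, (L * dist z w) * Real.exp (2 * L * (T - s)) := by
      rw [← Real.norm_eq_abs]
      refine intervalIntegral.norm_integral_le_of_norm_le (hcT t) ?_
        (Continuous.intervalIntegrable (by fun_prop) _ _)
      refine Filter.Eventually.of_forall fun s _ => ?_
      refine (hLip s _ _).trans ?_
      have : |W z s - W w s| ≤ Real.exp (2 * L * (T - s)) * dist z w := by
        simp only [W]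
        rw [← mul_sub, abs_mul, abs_of_pos (Real.exp_pos _)]
        exact mul_le_mul_of_nonneg_left
          (by rw [← Real.dist_eq]; exact BoundedContinuousFunction.dist_coe_le_dist s)
          (Real.exp_pos _).le
      calc _ ≤ L * (Real.exp (2 * L * (T - s)) * dist z w) :=
            mul_le_mul_of_nonneg_left this hL.le
        _ = _ := by ring
    rw [intervalIntegral.integral_const_mul, aux_expint _ _ _ _ (by positivity)] at e2
    rw [e1, abs_mul, abs_of_pos (Real.exp_pos _)]
    have hd : 0 ≤ dist z w := dist_nonneg
    have e3 : |∫ s in (c t)..T, (G s (W z s) - G s (W w s))| ≤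
        (dist z w / 2) * Real.exp (2 * L * (T - c t)) := by
      refine e2.trans ?_
      have : L * dist z w * ((Real.exp (2 * L * (T - c t)) - Real.exp (2 * L * (T - T)))
          / (2 * L)) = (dist z w / 2) * (Real.exp (2 * L * (T - c t)) - 1) := by
        rw [sub_self, mul_zero, Real.exp_zero]
        field_simp
      rw [this]
      exact mul_le_mul_of_nonneg_left (by linarith) (by positivity)
    calc _ ≤ Real.exp (-(2 * L * (T - c t))) *
          ((dist z w / 2) * Real.exp (2 * L * (T - c t))) :=
          mul_le_mul_of_nonneg_left e3 (Real.exp_pos _).le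
      _ = dist z w / 2 := by
          rw [Real.exp_neg]; field_simp
      _ ≤ _ := by
          apply le_of_eq; push_cast; ring
  let z := hP.fixedPoint P
  have hz : P z = z := hP.fixedPoint_isFixedPt
  refine ⟨W z, hW z, fun t ht => ?_⟩
  have h1 : z t = R z t := by
    conv_lhs => rw [← hz]
    rfl
  change Real.exp (2 * L * (T - t)) * z t = _
  rw [h1]
  simp only [R]
  rw [hce t ht, ← mul_assoc, ← Real.exp_add, add_neg_cancel, Real.exp_zero, one_mul]

lemma aux_compare (T L h1 h2 : ℝ) (hT : 0 < T) (hL : 0 < L) (hh : h1 ≤ h2)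
    (y1 y2 g1 g2 : ℝ → ℝ) (hy1 : Continuous y1) (hy2 : Continuous y2)
    (hg1 : ∀ a b, IntervalIntegrable g1 volume a b)
    (hg2 : ∀ a b, IntervalIntegrable g2 volume a b)
    (e1 : ∀ t ∈ Icc (0:ℝ) T, y1 t = h1 + ∫ s in t..T, g1 s)
    (e2 : ∀ t ∈ Icc (0:ℝ) T, y2 t = h2 + ∫ s in t..T, g2 s)
    (hg : ∀ t ∈ Icc (0:ℝ) T, y2 t < y1 t → g1 t - g2 t ≤ L * (y1 t - y2 t)) :
    ∀ t ∈ Icc (0:ℝ) T, y1 t ≤ y2 t := by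
  obtain ⟨t0, ht0, hmax⟩ := isCompact_Icc.exists_isMaxOn (nonempty_Icc.2 hT.le)
    (f := fun t => Real.exp (-(2 * L * (T - t))) * (y1 t - y2 t))
    (Continuous.continuousOn (by fun_prop))
  set M := Real.exp (-(2 * L * (T - t0))) * (y1 t0 - y2 t0) with hM
  have hbd : ∀ t ∈ Icc (0:ℝ) T, y1 t - y2 t ≤ M * Real.exp (2 * L * (T - t)) := by
    intro t ht
    have h : Real.exp (-(2 * L * (T - t))) * (y1 t - y2 t) ≤ M := hmax ht
    rw [Real.exp_neg, inv_mul_le_iff₀ (Real.exp_pos _)] at h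
    linarith
  by_cases hMp : M ≤ 0
  · intro t ht
    have := hbd t ht
    have := mul_nonpos_of_nonpos_of_nonneg hMp (Real.exp_pos (2 * L * (T - t))).le
    linarith
  exfalso
  push Not at hMp
  let S := Icc t0 T ∩ {t | y1 t ≤ y2 t}
  have hSc : IsCompact S := isCompact_Icc.inter_right (isClosed_le hy1 hy2)
  have hTT : y1 T ≤ y2 T := by
    rw [e1 T ⟨hT.le, le_rfl⟩, e2 T ⟨hT.le, le_rfl⟩]; simpa using hh
  have hSn : S.Nonempty := ⟨T, ⟨ht0.2, le_rfl⟩, hTT⟩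
  obtain ⟨t1, ht1, hmin⟩ := hSc.exists_isLeast hSn
  have ht1I : t1 ∈ Icc (0:ℝ) T := ⟨ht0.1.trans ht1.1.1, ht1.1.2⟩
  have hpos : ∀ s ∈ Ioo t0 t1, y2 s < y1 s := by
    intro s hs
    by_contra hcon
    push Not at hcon
    have : t1 ≤ s := hmin ⟨⟨hs.1.le, hs.2.le.trans ht1.1.2⟩, hcon⟩
    exact absurd hs.2 (not_lt.2 this)
  have hd : ∀ t ∈ Icc (0:ℝ) T, y1 t - y2 t = (h1 - h2) + ∫ s in t..T, (g1 s - g2 s) := by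
    intro t ht
    rw [e1 t ht, e2 t ht, intervalIntegral.integral_sub (hg1 _ _) (hg2 _ _)]; ring
  have hgi : ∀ a b, IntervalIntegrable (fun s => g1 s - g2 s) volume a b :=
    fun a b => (hg1 a b).sub (hg2 a b)
  have hsplit := intervalIntegral.integral_add_adjacent_intervals (hgi t0 t1) (hgi t1 T)
  have hA := hd t0 ht0
  have hB := hd t1 ht1I
  have hle1 : y1 t1 ≤ y2 t1 := ht1.2
  have hC : ∫ s in t0..t1, (g1 s - g2 s) ≤
      ∫ s in t0..t1, (L * M) * Real.exp (2 * L * (T - s)) := by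
    refine intervalIntegral.integral_mono_on_of_le_Ioo ht1.1.1 (hgi _ _)
      (Continuous.intervalIntegrable (by fun_prop) _ _) ?_
    intro s hs
    have hsI : s ∈ Icc (0:ℝ) T := ⟨ht0.1.trans hs.1.le, hs.2.le.trans ht1.1.2⟩
    have := mul_le_mul_of_nonneg_left (hbd s hsI) hL.le
    linarith [hg s hsI (hpos s hs)]
  rw [intervalIntegral.integral_const_mul, aux_expint _ _ _ _ (by positivity)] at hC
  have hD : L * M * ((Real.exp (2 * L * (T - t0)) - Real.exp (2 * L * (T - t1)))
          / (2 * L)) = (M / 2) * (Real.exp (2 * L * (T - t0)) - Real.exp (2 * L * (T - t1))) := by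
    field_simp
  rw [hD] at hC
  have hE : y1 t0 - y2 t0 = M * Real.exp (2 * L * (T - t0)) := by
    rw [hM, Real.exp_neg]; field_simp
  have p0 := mul_pos hMp (Real.exp_pos (2 * L * (T - t0)))
  have p1 := mul_pos hMp (Real.exp_pos (2 * L * (T - t1)))
  nlinarith

lemma aux_ext (T c3 L K : ℝ) (hc3 : 0 < c3) (hL : 0 < L) (F : ℝ → ℝ → ℝ)
    (hm : ∀ y : ℝ, Measurable fun t => F t y)
    (hLip : ∀ t ∈ Icc (0:ℝ) T,
      LipschitzOnWith (Real.toNNReal L) (fun y => F t y) (Icc 0 c3))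
    (hb : ∀ t ∈ Icc (0:ℝ) T, ∀ y ∈ Icc (0:ℝ) c3, |F t y| ≤ K) (hK : 0 ≤ K) :
    ∃ G : ℝ → ℝ → ℝ, (∀ y, Measurable fun t => G t y) ∧
      (∀ t x y, |G t x - G t y| ≤ L * |x - y|) ∧ (∀ t y, |G t y| ≤ K) ∧
      (∀ t ∈ Icc (0:ℝ) T, ∀ y, G t y = F t (max 0 (min y c3))) := by
  classical
  have hp : ∀ y : ℝ, max 0 (min y c3) ∈ Icc 0 c3 := fun y =>
    ⟨le_max_left _ _, max_le hc3.le (min_le_right _ _)⟩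
  refine ⟨fun t y => if t ∈ Icc (0:ℝ) T then F t (max 0 (min y c3)) else 0, ?_, ?_, ?_, ?_⟩
  · intro y
    exact Measurable.ite measurableSet_Icc (hm _) measurable_const
  · intro t x y
    by_cases ht : t ∈ Icc (0:ℝ) T
    · simp only [ht, if_true]
      have := (hLip t ht).dist_le_mul _ (hp x) _ (hp y)
      rw [Real.dist_eq, Real.dist_eq, Real.coe_toNNReal L hL.le] at this
      refine this.trans (mul_le_mul_of_nonneg_left ?_ hL.le)
      refine (abs_max_sub_max_le_max 0 _ 0 _).trans ?_
      rw [sub_self, abs_zero, max_eq_right (abs_nonneg _)]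
      refine (abs_min_sub_min_le_max x c3 y c3).trans ?_
      rw [sub_self, abs_zero, max_eq_left (abs_nonneg _)]
    · simp only [ht, if_false]
      simp; positivity
  · intro t y
    by_cases ht : t ∈ Icc (0:ℝ) T
    · simp only [ht, if_true]
      exact hb t ht _ (hp y)
    · simp only [ht, if_false]; simpa using hK
  · intro t ht y
    simp only [ht, if_true]

/-- Bounded solutions of the dominating ODEs in the case `σ₃ ≤ c₁`,
`0 ≤ h ≤ c₂`, `f₁ ≥ 0` (Theorem 5.9, case (5.25)). -/
theorem stmt11
    (T c2 c3 L : ℝ) (hT : 0 < T) (hc2 : 0 < c2) (hc23 : c2 < c3) (hL : 0 < L)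
    (Fl Fu : ℝ → ℝ → ℝ)
    (hle : ∀ t ∈ Icc (0:ℝ) T, ∀ y : ℝ, Fl t y ≤ Fu t y)
    (hmeasu : ∀ y : ℝ, Measurable fun t => Fu t y)
    (hmeasl : ∀ y : ℝ, Measurable fun t => Fl t y)
    (hLipu : ∀ t ∈ Icc (0:ℝ) T,
      LipschitzOnWith (Real.toNNReal L) (fun y => Fu t y) (Icc 0 c3))
    (hLipl : ∀ t ∈ Icc (0:ℝ) T,
      LipschitzOnWith (Real.toNNReal L) (fun y => Fl t y) (Icc 0 c3))
    (hbdd : ∃ K : ℝ, ∀ t ∈ Icc (0:ℝ) T, ∀ y ∈ Icc (0:ℝ) c3,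
      |Fu t y| + |Fl t y| ≤ K)
    (hl hu : ℝ) (hlu : hl ≤ hu) (hhl : 0 ≤ hl) (hhu : hu ≤ c2)
    (hFl0 : ∀ t ∈ Icc (0:ℝ) T, 0 ≤ Fl t 0)
    (ε : ℝ) (hε : 0 < ε)
    (hFu : ∀ t ∈ Icc (0:ℝ) T, Fu t c3 ≤ ε)
    (hεsmall : ε * (Real.exp (L * T) - 1) / L ≤ c3 - c2) :
    ∃ yu yl : ℝ → ℝ,
      ContinuousOn yu (Icc 0 T) ∧ ContinuousOn yl (Icc 0 T) ∧
      (∀ t ∈ Icc (0:ℝ) T, yu t = hu + ∫ s in t..T, Fu s (yu s)) ∧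
      (∀ t ∈ Icc (0:ℝ) T, yl t = hl + ∫ s in t..T, Fl s (yl s)) ∧
      (∀ t ∈ Icc (0:ℝ) T, 0 ≤ yl t ∧ yl t ≤ yu t ∧ yu t ≤ c3) := by
  have hc3 : 0 < c3 := hc2.trans hc23
  obtain ⟨K, hK⟩ := hbdd
  have h0 : (0:ℝ) ∈ Icc (0:ℝ) T := ⟨le_rfl, hT.le⟩
  have h0c : (0:ℝ) ∈ Icc (0:ℝ) c3 := ⟨le_rfl, hc3.le⟩
  have hK0 : 0 ≤ K := le_trans (by positivity) (hK 0 h0 0 h0c)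
  obtain ⟨Gu, gum, guL, guK, gue⟩ := aux_ext T c3 L K hc3 hL Fu hmeasu hLipu
    (fun t ht y hy => by linarith [hK t ht y hy, abs_nonneg (Fl t y)]) hK0
  obtain ⟨Gl, glm, glL, glK, gle⟩ := aux_ext T c3 L K hc3 hL Fl hmeasl hLipl
    (fun t ht y hy => by linarith [hK t ht y hy, abs_nonneg (Fu t y)]) hK0
  obtain ⟨yu, yuc, yue⟩ := aux_exist T L K hu hT hL Gu gum guL guK
  obtain ⟨yl, ylc, yle⟩ := aux_exist T L K hl hT hL Gl glm glL glK
  have iu := aux_int Gu L K gum guL guK yu yuc.measurable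
  have il := aux_int Gl L K glm glL glK yl ylc.measurable
  have A1 : ∀ t ∈ Icc (0:ℝ) T, 0 ≤ yl t := by
    refine aux_compare T L 0 hl hT hL hhl (fun _ => 0) yl (fun _ => 0) _ continuous_const ylc
      (fun a b => intervalIntegrable_const) il (by simp) yle ?_
    intro t ht hlt
    have : Gl t (yl t) = Fl t 0 := by
      rw [gle t ht, max_eq_left ((min_le_left _ _).trans hlt.le)]
    have h1 := hFl0 t ht
    have h2 : 0 < L * (0 - yl t) := mul_pos hL (by linarith)
    simp only [this]
    linarith
  have A2 : ∀ t ∈ Icc (0:ℝ) T, yl t ≤ yu t := by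
    refine aux_compare T L hl hu hT hL hlu yl yu _ _ ylc yuc il iu yle yue ?_
    intro t ht hlt
    have h1 : Gl t (yl t) ≤ Gu t (yl t) := by
      rw [gle t ht, gue t ht]; exact hle t ht _
    have h2 := (le_abs_self _).trans (guL t (yl t) (yu t))
    rw [abs_of_pos (sub_pos.2 hlt)] at h2
    linarith
  let w : ℝ → ℝ := fun t => c3 + ε / L - (c3 - c2 + ε / L) * Real.exp (-L * (T - t))
  have hwc : Continuous w := by fun_prop
  have hw3 : ∀ t ∈ Icc (0:ℝ) T, w t ≤ c3 := by
    intro t ht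
    have h1 : Real.exp (-L * T) ≤ Real.exp (-L * (T - t)) := by
      apply Real.exp_le_exp.2
      nlinarith [ht.1]
    have h2 : ε / L ≤ (c3 - c2 + ε / L) * Real.exp (-L * T) := by
      have h3 : ε / L * Real.exp (L * T) ≤ c3 - c2 + ε / L := by
        have : ε * (Real.exp (L * T) - 1) / L = ε / L * Real.exp (L * T) - ε / L := by ring
        linarith
      have h4 := mul_le_mul_of_nonneg_right h3 (Real.exp_pos (-L * T)).le
      rwa [mul_assoc, ← Real.exp_add, neg_mul, add_neg_cancel, Real.exp_zero, mul_one,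
        ← neg_mul] at h4
    have h5 : 0 ≤ c3 - c2 + ε / L := by
      have : 0 < ε / L := by positivity
      linarith
    have h6 := mul_le_mul_of_nonneg_left h1 h5
    simp only [w]
    linarith
  have A3 : ∀ t ∈ Icc (0:ℝ) T, yu t ≤ w t := by
    refine aux_compare T L hu c2 hT hL hhu yu w _ (fun s => ε + L * (c3 - w s)) yuc hwc iu
      (fun a b => Continuous.intervalIntegrable (by fun_prop) _ _) yue ?_ ?_
    · intro t ht
      have : (fun s => ε + L * (c3 - w s)) =
          fun s => (L * (c3 - c2) + ε) * Real.exp (-L * (T - s)) := by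
        ext s; simp only [w]; field_simp; ring
      rw [this, intervalIntegral.integral_const_mul, aux_expint _ _ _ _ (by linarith), sub_self,
        mul_zero, Real.exp_zero]
      simp only [w]; field_simp; ring
    · intro t ht hlt
      have hw := hw3 t ht
      have h1 : Gu t (yu t) ≤ ε + L * (c3 - min (yu t) c3) := by
        have h2 : Gu t c3 = Fu t c3 := by
          rw [gue t ht, min_self, max_eq_right hc3.le]
        have h3 : Gu t (yu t) = Gu t (min (yu t) c3) := by
          rw [gue t ht, gue t ht, min_assoc, min_self]
        have h4 := (le_abs_self _).trans (guL t (min (yu t) c3) c3)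
        rw [abs_of_nonpos (by linarith [min_le_right (yu t) c3])] at h4
        have := hFu t ht
        rw [h3]
        linarith
      have h5 : w t ≤ min (yu t) c3 := le_min hlt.le hw
      have h6 := mul_le_mul_of_nonneg_left h5 hL.le
      have h7 : 0 < L * (yu t - w t) := mul_pos hL (by linarith)
      linarith
  have A4 : ∀ t ∈ Icc (0:ℝ) T, yu t ≤ c3 := fun t ht => (A3 t ht).trans (hw3 t ht)
  refine ⟨yu, yl, yuc.continuousOn, ylc.continuousOn, ?_, ?_, fun t ht =>
    ⟨A1 t ht, A2 t ht, A4 t ht⟩⟩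
  · intro t ht
    rw [yue t ht]
    congr 1
    refine intervalIntegral.integral_congr fun s hs => ?_
    rw [uIcc_of_le ht.2] at hs
    have hs' : s ∈ Icc (0:ℝ) T := ⟨ht.1.trans hs.1, hs.2⟩
    change Gu s (yu s) = Fu s (yu s)
    rw [gue s hs', min_eq_left (A4 s hs'), max_eq_right ((A1 s hs').trans (A2 s hs'))]
  · intro t ht
    rw [yle t ht]
    congr 1
    refine intervalIntegral.integral_congr fun s hs => ?_
    rw [uIcc_of_le ht.2] at hs
    have hs' : s ∈ Icc (0:ℝ) T := ⟨ht.1.trans hs.1, hs.2⟩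
    change Gl s (yl s) = Fl s (yl s)
    rw [gle s hs', min_eq_left ((A2 s hs').trans (A4 s hs')), max_eq_right (A1 s hs')]
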